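/- If U is subharmonic, non-negative, and continuous on the closed unit disk, and p ≥ 2, then ∫_{-1}^{1} U(x)^p dx ≤ ∫₀^{2π} U(e^{iθ})^p dθ. -/

import Mathlib

open Complex MeasureTheory Real

/-- A function is subharmonic on a set if it is upper semicontinuous there and satisfies the
sub-mean value inequality on every circle whose closed disk lies in the set. -/
def SubharmonicOn (u : ℂ → ℝ) (s : Set ℂ) : Prop :=
  UpperSemicontinuousOn u s ∧
    ∀ z ∈ s, ∀ ρ : ℝ, 0 < ρ → Metric.closedBall z ρ ⊆ s →
      u z ≤ (2 * π)⁻¹ * ∫ θ in (0:ℝ)..(2 * π), u (z + (ρ : ℂ) * Complex.exp (θ * Complex.I))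

lemma SubharmonicOn.le_circleAverage {u : ℂ → ℝ} {s : Set ℂ} (h : SubharmonicOn u s) {z : ℂ}
    (hz : z ∈ s) {ρ : ℝ} (hρ : 0 < ρ) (hs : Metric.closedBall z ρ ⊆ s) :
    u z ≤ circleAverage u z ρ :=
  h.2 z hz ρ hρ hs

lemma rpow_circleAverage_le {u : ℂ → ℝ} {z : ℂ} {ρ q : ℝ} (hρ : 0 ≤ ρ) (hq : 1 ≤ q)
    (hu : ContinuousOn u (Metric.sphere z ρ)) (hu0 : ∀ w ∈ Metric.sphere z ρ, 0 ≤ u w) :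
    circleAverage u z ρ ^ q ≤ circleAverage (fun w => u w ^ q) z ρ := by
  have hc : Continuous fun θ => u (circleMap z ρ θ) :=
    hu.comp_continuous (continuous_circleMap z ρ) fun θ => circleMap_mem_sphere z hρ θ
  have hcq : Continuous fun θ => u (circleMap z ρ θ) ^ q :=
    hc.rpow_const fun _ => Or.inr (by linarith)
  simp only [circleAverage_eq_intervalAverage]
  refine (convexOn_rpow hq).map_set_average_le
    (continuousOn_id.rpow_const fun _ _ => Or.inr (by linarith)) isClosed_Ici ?_ ?_
    (Filter.Eventually.of_forall fun θ => hu0 _ (circleMap_mem_sphere z hρ θ)) ?_ ?_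
  · simp [Set.uIoc_of_le two_pi_pos.le, pi_pos]
  · simp [Set.uIoc_of_le two_pi_pos.le, ENNReal.mul_eq_top]
  · exact (intervalIntegrable_iff.1 (hc.intervalIntegrable _ _))
  · exact (intervalIntegrable_iff.1 (hcq.intervalIntegrable _ _))

/-- The maximum principle for functions satisfying the sub-mean value inequality. -/
lemma nonpos_on_closedBall_of_le_circleAverage {h : ℂ → ℝ}
    (hc : ContinuousOn h (Metric.closedBall 0 1))
    (hm : ∀ z ∈ Metric.ball (0:ℂ) 1, ∀ ρ : ℝ, 0 < ρ → Metric.closedBall z ρ ⊆ Metric.ball 0 1 →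
      h z ≤ circleAverage h z ρ)
    (hb : ∀ z ∈ Metric.sphere (0:ℂ) 1, h z ≤ 0) :
    ∀ z ∈ Metric.closedBall (0:ℂ) 1, h z ≤ 0 := by
  have hK : IsCompact (Metric.closedBall (0:ℂ) 1) := isCompact_closedBall 0 1
  obtain ⟨z₀, hz₀, hmax⟩ := hK.exists_isMaxOn ⟨0, by simp⟩ hc
  have hS : IsCompact (Metric.closedBall (0:ℂ) 1 ∩ h ⁻¹' Set.Ici (h z₀)) :=
    hK.of_isClosed_subset (hc.preimage_isClosed_of_isClosed Metric.isClosed_closedBall isClosed_Ici)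
      Set.inter_subset_left
  obtain ⟨z₁, ⟨hz₁, hz₁'⟩, hfar⟩ := hS.exists_isMaxOn ⟨z₀, hz₀, le_refl (h z₀)⟩ continuous_norm.continuousOn
  suffices h z₁ ≤ 0 from fun z hz => (hmax hz).trans (le_trans hz₁' this)
  by_cases hz₁b : ‖z₁‖ = 1
  · exact hb z₁ (by simpa using hz₁b)
  have hlt : ‖z₁‖ < 1 := lt_of_le_of_ne (by simpa using hz₁) hz₁b
  exfalso
  set ρ := (1 - ‖z₁‖) / 2 with hρ
  have hρ0 : 0 < ρ := by linarith
  have hsub : Metric.closedBall z₁ ρ ⊆ Metric.ball 0 1 := by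
    apply Metric.closedBall_subset_ball'
    rw [dist_zero_right]; linarith
  have hcc : Continuous fun θ => h (circleMap z₁ ρ θ) :=
    hc.comp_continuous (continuous_circleMap z₁ ρ) fun θ =>
      Metric.ball_subset_closedBall (hsub (circleMap_mem_closedBall z₁ hρ0.le θ))
  have hle : ∀ θ, h (circleMap z₁ ρ θ) ≤ h z₀ := fun θ =>
    hmax (Metric.ball_subset_closedBall (hsub (circleMap_mem_closedBall z₁ hρ0.le θ)))
  obtain ⟨w, hw, hwn⟩ : ∃ w ∈ Metric.sphere z₁ ρ, ‖z₁‖ < ‖w‖ := by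
    by_cases h0 : z₁ = 0
    · refine ⟨ρ, by simp [h0, hρ0.le], ?_⟩
      simp [h0, hρ0.ne']
    · have hn : 0 < ‖z₁‖ := norm_pos_iff.2 h0
      refine ⟨z₁ + (ρ / ‖z₁‖ : ℝ) * z₁, ?_, ?_⟩
      · simp [hn.ne', hρ0.le]
      · have : z₁ + (ρ / ‖z₁‖ : ℝ) * z₁ = ((1 + ρ / ‖z₁‖ : ℝ) : ℂ) * z₁ := by push_cast; ring
        rw [this, norm_mul, Complex.norm_of_nonneg (by positivity)]
        have : 0 < ρ / ‖z₁‖ := by positivity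
        nlinarith
  have hwlt : h w < h z₀ := by
    by_contra! hcon
    have hwK : w ∈ Metric.closedBall (0:ℂ) 1 :=
      Metric.ball_subset_closedBall (hsub (Metric.sphere_subset_closedBall hw))
    exact absurd (hfar ⟨hwK, hcon⟩) (not_le.2 hwn)
  obtain ⟨θ, hθ, rfl⟩ : w ∈ circleMap z₁ ρ '' Set.Ioc 0 (2 * π) := by
    rwa [image_circleMap_Ioc, abs_of_pos hρ0]
  have hint := intervalIntegral.integral_lt_integral_of_continuousOn_of_le_of_exists_lt
    two_pi_pos hcc.continuousOn (continuousOn_const (c := h z₀)) (fun θ _ => hle θ)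
    ⟨θ, Set.Ioc_subset_Icc_self hθ, hwlt⟩
  have := hm z₁ (by simpa using hlt) ρ hρ0 hsub
  rw [circleAverage_def, smul_eq_mul] at this
  rw [intervalIntegral.integral_const, smul_eq_mul, sub_zero] at hint
  have h2 : (2 * π)⁻¹ * (∫ θ in (0:ℝ)..2 * π, h (circleMap z₁ ρ θ)) < h z₀ := by
    rw [inv_mul_lt_iff₀ two_pi_pos]; exact hint
  have : h z₀ ≤ h z₁ := hz₁'
  linarith

/-- Every continuous real function on the unit circle is uniformly approximated by real parts of
complex polynomials. -/
lemma exists_polynomial_re_near {g : ℂ → ℝ} (hg : ContinuousOn g (Metric.sphere 0 1))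
    {ε : ℝ} (hε : 0 < ε) :
    ∃ P : Polynomial ℂ, (P.eval 0).im = 0 ∧
      ∀ z ∈ Metric.sphere (0:ℂ) 1, |(P.eval z).re - g z| < ε := by
  have : Fact ((0:ℝ) < 1) := ⟨one_pos⟩
  let G : C(AddCircle (1:ℝ), ℂ) := ⟨fun x => (g (AddCircle.toCircle x : ℂ) : ℂ), by
    refine continuous_ofReal.comp (hg.comp_continuous ?_ fun x => by simp [Circle.norm_coe])
    exact continuous_subtype_val.comp AddCircle.continuous_toCircle⟩
  have hG : G ∈ (Submodule.span ℂ (Set.range <| @fourier (1:ℝ))).topologicalClosure := by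
    rw [span_fourier_closure_eq_top]; trivial
  obtain ⟨t, ht, htG⟩ := Metric.mem_closure_iff.1 hG ε hε
  have key : ∃ P Q : Polynomial ℂ, ∀ x : AddCircle (1:ℝ), t x =
      P.eval (AddCircle.toCircle x : ℂ) + (starRingEnd ℂ) (Q.eval (AddCircle.toCircle x : ℂ)) := by
    clear htG
    induction ht using Submodule.span_induction with
    | mem t ht =>
      obtain ⟨n, rfl⟩ := ht
      obtain ⟨m, rfl | rfl⟩ := n.eq_nat_or_neg
      · exact ⟨.X ^ m, 0, fun x => by rw [fourier_apply, AddCircle.toCircle_zsmul]; simp⟩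
      · refine ⟨0, .X ^ m, fun x => ?_⟩
        rw [fourier_apply, AddCircle.toCircle_zsmul]
        simp [← Circle.coe_inv_eq_conj]
    | zero => exact ⟨0, 0, by simp⟩
    | add s t _ _ hs ht =>
      obtain ⟨P, Q, h⟩ := hs
      obtain ⟨P', Q', h'⟩ := ht
      exact ⟨P + P', Q + Q', fun x => by simp [h, h']; ring⟩
    | smul a t _ ht =>
      obtain ⟨P, Q, h⟩ := ht
      exact ⟨.C a * P, .C (starRingEnd ℂ a) * Q, fun x => by simp [h]; ring⟩
  obtain ⟨P, Q, hPQ⟩ := key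
  refine ⟨P + Q - .C (((P + Q).eval 0).im * I), by simp, fun z hz => ?_⟩
  obtain ⟨x, hx⟩ := (AddCircle.homeomorphCircle (one_ne_zero (α := ℝ))).surjective
    ⟨z, by simpa [Submonoid.unitSphere] using hz⟩
  rw [AddCircle.homeomorphCircle_apply] at hx
  have hxz : (AddCircle.toCircle x : ℂ) = z := by rw [hx]
  have h1 := (ContinuousMap.dist_apply_le_dist x).trans_lt htG
  rw [dist_comm, Complex.dist_eq, hPQ, hxz] at h1
  have h2 := (Complex.abs_re_le_norm _).trans_lt h1
  simpa [G, hxz] using h2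

/-- The Fejér-Riesz inequality for polynomials. -/
lemma polynomial_fejer_riesz (P : Polynomial ℂ) :
    (∫ x in (-1:ℝ)..1, ‖P.eval (x : ℂ)‖ ^ 2) ≤
      2⁻¹ * ∫ θ in (0:ℝ)..(2 * π), ‖P.eval (circleMap 0 1 θ)‖ ^ 2 := by
  set Q := P * P.map (starRingEnd ℂ) with hQ
  have hQe : ∀ z : ℂ, Q.eval z = P.eval z * (starRingEnd ℂ) (P.eval (starRingEnd ℂ z)) := by
    intro z
    rw [hQ, Polynomial.eval_mul, ← Polynomial.eval_map_apply, Complex.conj_conj]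
  obtain ⟨F, hF⟩ := (Q.differentiable.differentiableOn (s := Metric.ball 0 2)).isExactOn_ball
  have hcm : ∀ θ, circleMap 0 1 θ ∈ Metric.ball (0:ℂ) 2 := fun θ => by simp
  have hmap := continuous_circleMap 0 1
  have hline : (∫ x in (-1:ℝ)..1, Q.eval (x : ℂ)) = F 1 - F (-1) := by
    rw [intervalIntegral.integral_eq_sub_of_hasDerivAt (f := fun x : ℝ => F x)]
    · simp
    · intro x hx
      refine (hF x ?_).comp_ofReal
      rw [Set.uIcc_of_le (by norm_num)] at hx
      have : |x| ≤ 1 := abs_le.2 hx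
      simp only [Metric.mem_ball, dist_zero_right, Complex.norm_real, Real.norm_eq_abs]
      linarith
    · exact (Q.continuous.comp continuous_ofReal).intervalIntegrable _ _
  have hcQ : Continuous fun θ => circleMap 0 1 θ * I * Q.eval (circleMap 0 1 θ) :=
    (hmap.mul continuous_const).mul (Q.continuous.comp hmap)
  have harc : (∫ θ in (0:ℝ)..π, circleMap 0 1 θ * I * Q.eval (circleMap 0 1 θ)) =
      F (-1) - F 1 := by
    rw [intervalIntegral.integral_eq_sub_of_hasDerivAt (f := fun θ : ℝ => F (circleMap 0 1 θ))]
    · simp [circleMap_zero]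
    · intro θ _
      simpa [Function.comp_def] using (hF _ (hcm θ)).scomp θ (hasDerivAt_circleMap 0 1 θ)
    · exact hcQ.intervalIntegrable _ _
  set N : ℝ → ℝ := fun θ => ‖P.eval (circleMap 0 1 θ)‖ ^ 2 with hN
  have hNc : Continuous N := ((P.continuous.comp hmap).norm).pow 2
  have hNp : Function.Periodic N (2 * π) := fun θ => by
    simp only [hN, periodic_circleMap 0 1 θ]
  have hbound : ∀ θ, ‖circleMap 0 1 θ * I * Q.eval (circleMap 0 1 θ)‖ ≤ 2⁻¹ * (N θ + N (-θ)) := by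
    intro θ
    have hconj : (starRingEnd ℂ) (circleMap 0 1 θ) = circleMap 0 1 (-θ) := by
      simp [circleMap_zero, ← Complex.exp_conj]
    rw [hQe, hconj]
    simp only [norm_mul, norm_circleMap_zero, Complex.norm_I, RCLike.norm_conj, hN, abs_one, one_mul]
    nlinarith [sq_nonneg (‖P.eval (circleMap 0 1 θ)‖ - ‖P.eval (circleMap 0 1 (-θ))‖)]
  have hreal : (∫ x in (-1:ℝ)..1, Q.eval (x : ℂ)) =
      ((∫ x in (-1:ℝ)..1, ‖P.eval (x : ℂ)‖ ^ 2 : ℝ) : ℂ) := by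
    rw [← intervalIntegral.integral_ofReal]
    refine intervalIntegral.integral_congr fun x _ => ?_
    simp only [hQe, Complex.conj_ofReal, Complex.mul_conj, Complex.normSq_eq_norm_sq]
  have hNn : Continuous fun θ => N (-θ) := hNc.comp continuous_neg
  calc (∫ x in (-1:ℝ)..1, ‖P.eval (x : ℂ)‖ ^ 2)
      ≤ ‖((∫ x in (-1:ℝ)..1, ‖P.eval (x : ℂ)‖ ^ 2 : ℝ) : ℂ)‖ := by
        rw [Complex.norm_real]; exact Real.le_norm_self _
    _ = ‖∫ θ in (0:ℝ)..π, circleMap 0 1 θ * I * Q.eval (circleMap 0 1 θ)‖ := by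
        rw [← hreal, hline, harc, norm_sub_rev]
    _ ≤ ∫ θ in (0:ℝ)..π, ‖circleMap 0 1 θ * I * Q.eval (circleMap 0 1 θ)‖ :=
        intervalIntegral.norm_integral_le_integral_norm pi_pos.le
    _ ≤ ∫ θ in (0:ℝ)..π, 2⁻¹ * (N θ + N (-θ)) :=
        intervalIntegral.integral_mono pi_pos.le (hcQ.norm.intervalIntegrable _ _)
          ((continuous_const.mul (hNc.add hNn)).intervalIntegrable _ _) hbound
    _ = 2⁻¹ * ∫ θ in (-π)..π, N θ := by
        rw [intervalIntegral.integral_const_mul, intervalIntegral.integral_add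
          (hNc.intervalIntegrable _ _) (hNn.intervalIntegrable _ _),
          intervalIntegral.integral_comp_neg, neg_zero, add_comm,
          intervalIntegral.integral_add_adjacent_intervals (hNc.intervalIntegrable _ _)
          (hNc.intervalIntegrable _ _)]
    _ = 2⁻¹ * ∫ θ in (0:ℝ)..(2 * π), N θ := by
        have := hNp.intervalIntegral_add_eq (-π) 0
        rw [show -π + 2 * π = π by ring, zero_add] at this
        rw [this]

lemma polynomial_integral_norm_sq_le (P : Polynomial ℂ) (h0 : (P.eval 0).im = 0) :
    (∫ θ in (0:ℝ)..(2 * π), ‖P.eval (circleMap 0 1 θ)‖ ^ 2) ≤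
      2 * ∫ θ in (0:ℝ)..(2 * π), (P.eval (circleMap 0 1 θ)).re ^ 2 := by
  have hc : Continuous fun θ => P.eval (circleMap 0 1 θ) :=
    P.continuous.comp (continuous_circleMap 0 1)
  have hd : circleAverage (fun z => P.eval z ^ 2) 0 1 = P.eval 0 ^ 2 :=
    DiffContOnCl.circleAverage (f := fun z => P.eval z ^ 2)
      (P.differentiable.pow 2).diffContOnCl
  have hc2 : Continuous fun θ => P.eval (circleMap 0 1 θ) ^ 2 := hc.pow 2
  have hre : 0 ≤ ∫ θ in (0:ℝ)..(2 * π), (P.eval (circleMap 0 1 θ) ^ 2).re := by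
    have h1 := reCLM.intervalIntegral_comp_comm
      (hc2.intervalIntegrable (μ := volume) 0 (2 * π))
    have h2 := congrArg Complex.re hd
    rw [circleAverage_def, Complex.smul_re, smul_eq_mul, sq (P.eval 0), Complex.mul_re, h0] at h2
    simp only [reCLM_apply] at h1
    rw [h1]
    by_contra! hneg
    have := mul_neg_of_pos_of_neg (inv_pos.2 two_pi_pos) hneg
    nlinarith [mul_self_nonneg (P.eval 0).re]
  have hsplit : ∀ θ, ‖P.eval (circleMap 0 1 θ)‖ ^ 2 =
      2 * (P.eval (circleMap 0 1 θ)).re ^ 2 - (P.eval (circleMap 0 1 θ) ^ 2).re := by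
    intro θ
    rw [← Complex.normSq_eq_norm_sq, Complex.normSq_apply, sq (P.eval _), Complex.mul_re]
    ring
  have hcr : Continuous fun θ => 2 * (P.eval (circleMap 0 1 θ)).re ^ 2 :=
    continuous_const.mul ((continuous_re.comp hc).pow 2)
  have hcs : Continuous fun θ => (P.eval (circleMap 0 1 θ) ^ 2).re := continuous_re.comp hc2
  simp_rw [hsplit]
  rw [intervalIntegral.integral_sub (hcr.intervalIntegrable _ _)
    (hcs.intervalIntegrable _ _), intervalIntegral.integral_const_mul]
  linarith

lemma integral_re_sq_diameter_le (P : Polynomial ℂ) (h0 : (P.eval 0).im = 0) :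
    (∫ x in (-1:ℝ)..1, (P.eval (x : ℂ)).re ^ 2) ≤
      ∫ θ in (0:ℝ)..(2 * π), (P.eval (circleMap 0 1 θ)).re ^ 2 := by
  have hc : Continuous fun x : ℝ => P.eval (x : ℂ) := P.continuous.comp continuous_ofReal
  have h1 : (∫ x in (-1:ℝ)..1, (P.eval (x : ℂ)).re ^ 2) ≤
      ∫ x in (-1:ℝ)..1, ‖P.eval (x : ℂ)‖ ^ 2 :=
    intervalIntegral.integral_mono (by norm_num)
      (((continuous_re.comp hc).pow 2).intervalIntegrable _ _)
      ((hc.norm.pow 2).intervalIntegrable _ _)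
      fun x => sq_le_sq.2 (by simpa using Complex.abs_re_le_norm _)
  linarith [polynomial_fejer_riesz P, polynomial_integral_norm_sq_le P h0]

lemma polynomial_circleAverage_re (P : Polynomial ℂ) (z : ℂ) (ρ : ℝ) :
    circleAverage (fun w => (P.eval w).re) z ρ = (P.eval z).re := by
  have hd : circleAverage (fun w => P.eval w) z ρ = P.eval z :=
    DiffContOnCl.circleAverage P.differentiable.diffContOnCl
  have hi : CircleIntegrable (fun w => P.eval w) z ρ :=
    P.continuous.continuousOn.circleIntegrable'
  rw [← hd]
  exact reCLM.circleAverage_comp_comm hi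

/-- The quadratic case: the integral of `W ^ 2` over the diameter is at most that over the unit
circle. -/
lemma integral_sq_diameter_le {W : ℂ → ℝ} (hc : ContinuousOn W (Metric.closedBall 0 1))
    (h0 : ∀ z ∈ Metric.closedBall (0:ℂ) 1, 0 ≤ W z)
    (hm : ∀ z ∈ Metric.ball (0:ℂ) 1, ∀ ρ : ℝ, 0 < ρ → Metric.closedBall z ρ ⊆ Metric.ball 0 1 →
      W z ≤ circleAverage W z ρ) :
    (∫ x in (-1:ℝ)..1, W (x : ℂ) ^ 2) ≤ ∫ θ in (0:ℝ)..(2 * π), W (circleMap 0 1 θ) ^ 2 := by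
  have hmem : ∀ θ, circleMap 0 1 θ ∈ Metric.sphere (0:ℂ) 1 :=
    circleMap_mem_sphere 0 zero_le_one
  have hdiam : ∀ x ∈ Set.Icc (-1:ℝ) 1, (x : ℂ) ∈ Metric.closedBall (0:ℂ) 1 := fun x hx => by
    simpa using abs_le.2 hx
  have hcirc : Continuous fun θ => W (circleMap 0 1 θ) :=
    hc.comp_continuous (continuous_circleMap 0 1) fun θ => Metric.sphere_subset_closedBall (hmem θ)
  have hline : ContinuousOn (fun x : ℝ => W (x : ℂ)) (Set.Icc (-1) 1) :=
    hc.comp continuous_ofReal.continuousOn hdiam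
  have happrox : ∀ ε : ℝ, 0 < ε → (∫ x in (-1:ℝ)..1, W (x : ℂ) ^ 2) ≤
      (∫ θ in (0:ℝ)..(2 * π), W (circleMap 0 1 θ) ^ 2) +
        4 * ε * (∫ θ in (0:ℝ)..(2 * π), W (circleMap 0 1 θ)) + 2 * π * (4 * ε ^ 2) := by
    intro ε hε
    obtain ⟨P, hP0, hP⟩ := exists_polynomial_re_near (g := fun z => W z + ε)
      ((hc.mono Metric.sphere_subset_closedBall).add continuousOn_const) hε
    have hPc : Continuous fun z => (P.eval z).re := continuous_re.comp P.continuous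
    have hle : ∀ z ∈ Metric.closedBall (0:ℂ) 1, W z ≤ (P.eval z).re := by
      have := nonpos_on_closedBall_of_le_circleAverage (h := fun z => W z - (P.eval z).re)
        (hc.sub hPc.continuousOn) ?_ ?_
      · exact fun z hz => sub_nonpos.1 (this z hz)
      · intro z hz ρ hρ hs
        rw [circleAverage_fun_sub, polynomial_circleAverage_re]
        · linarith [hm z hz ρ hρ hs]
        · exact (hc.mono ((Metric.sphere_subset_closedBall.trans hs).trans
            Metric.ball_subset_closedBall)).circleIntegrable hρ.le
        · exact hPc.continuousOn.circleIntegrable hρ.le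
      · intro z hz
        have := abs_lt.1 (hP z hz)
        linarith
    have hPx : Continuous fun x : ℝ => (P.eval (x : ℂ)).re := hPc.comp continuous_ofReal
    have hPθ : Continuous fun θ => (P.eval (circleMap 0 1 θ)).re :=
      hPc.comp (continuous_circleMap 0 1)
    have hsq : Continuous fun θ => W (circleMap 0 1 θ) ^ 2 := hcirc.pow 2
    have hlin : Continuous fun θ => 4 * ε * W (circleMap 0 1 θ) := continuous_const.mul hcirc
    have hsum : Continuous fun θ => W (circleMap 0 1 θ) ^ 2 + 4 * ε * W (circleMap 0 1 θ) :=
      hsq.add hlin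
    calc (∫ x in (-1:ℝ)..1, W (x : ℂ) ^ 2)
        ≤ ∫ x in (-1:ℝ)..1, (P.eval (x : ℂ)).re ^ 2 := by
          refine intervalIntegral.integral_mono_on (by norm_num)
            ((hline.pow 2).intervalIntegrable_of_Icc (by norm_num))
            ((hPx.pow 2).intervalIntegrable _ _) fun x hx => ?_
          exact pow_le_pow_left₀ (h0 _ (hdiam x hx)) (hle _ (hdiam x hx)) 2
      _ ≤ ∫ θ in (0:ℝ)..(2 * π), (P.eval (circleMap 0 1 θ)).re ^ 2 :=
          integral_re_sq_diameter_le P hP0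
      _ ≤ ∫ θ in (0:ℝ)..(2 * π),
            (W (circleMap 0 1 θ) ^ 2 + 4 * ε * W (circleMap 0 1 θ) + 4 * ε ^ 2) := by
          refine intervalIntegral.integral_mono two_pi_pos.le
            ((hPθ.pow 2).intervalIntegrable _ _)
            ((hsum.add continuous_const).intervalIntegrable _ _) fun θ => ?_
          have hθ := Metric.sphere_subset_closedBall (hmem θ)
          have h1 := h0 _ hθ
          have h2 := hle _ hθ
          have h3 := abs_lt.1 (hP _ (hmem θ))
          calc (P.eval (circleMap 0 1 θ)).re ^ 2 ≤ (W (circleMap 0 1 θ) + 2 * ε) ^ 2 :=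
                pow_le_pow_left₀ (h1.trans h2) (by linarith) 2
            _ = _ := by ring
      _ = _ := by
          rw [intervalIntegral.integral_add (hsum.intervalIntegrable _ _)
            (continuous_const.intervalIntegrable _ _), intervalIntegral.integral_add
            (hsq.intervalIntegrable _ _) (hlin.intervalIntegrable _ _),
            intervalIntegral.integral_const_mul, intervalIntegral.integral_const]
          simp
  have hlim : Filter.Tendsto (fun ε : ℝ => (∫ θ in (0:ℝ)..(2 * π), W (circleMap 0 1 θ) ^ 2) +
      4 * ε * (∫ θ in (0:ℝ)..(2 * π), W (circleMap 0 1 θ)) + 2 * π * (4 * ε ^ 2))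
      (nhdsWithin 0 (Set.Ioi 0)) (nhds (∫ θ in (0:ℝ)..(2 * π), W (circleMap 0 1 θ) ^ 2)) := by
    refine Filter.Tendsto.mono_left ?_ nhdsWithin_le_nhds
    refine Continuous.tendsto' (by fun_prop) _ _ (by simp)
  exact ge_of_tendsto hlim (Filter.eventually_of_mem self_mem_nhdsWithin happrox)

/-- **Frazer's theorem, `n = 1`.** If `U` is non-negative and continuous on the closed unit
disk, subharmonic on the open unit disk, and `p ≥ 2`, then
`∫_{-1}^{1} U(x)^p dx ≤ ∫₀^{2π} U(e^{iθ})^p dθ`. -/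
theorem frazer_diameter (p : ℝ) (hp : 2 ≤ p) (U : ℂ → ℝ)
    (hUsub : SubharmonicOn U (Metric.ball 0 1))
    (hUnonneg : ∀ z ∈ Metric.closedBall (0:ℂ) 1, 0 ≤ U z)
    (hUcont : ContinuousOn U (Metric.closedBall 0 1)) :
    (∫ x in (-1:ℝ)..1, U (x : ℂ) ^ p) ≤
      ∫ θ in (0:ℝ)..(2 * π), U (Complex.exp (θ * Complex.I)) ^ p := by
  have hsq : ∀ z ∈ Metric.closedBall (0:ℂ) 1, (U z ^ (p / 2)) ^ 2 = U z ^ p := fun z hz => by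
    rw [← Real.rpow_mul_natCast (hUnonneg z hz)]
    congr 1
    push_cast
    ring
  have key := integral_sq_diameter_le (W := fun z => U z ^ (p / 2))
    (hUcont.rpow_const fun _ _ => Or.inr (by linarith))
    (fun z hz => Real.rpow_nonneg (hUnonneg z hz) _) ?_
  · convert key using 1
    · refine intervalIntegral.integral_congr fun x hx => (hsq x ?_).symm
      rw [Set.uIcc_of_le (by norm_num)] at hx
      simpa using abs_le.2 hx
    · refine intervalIntegral.integral_congr fun θ _ => ?_
      have h := hsq _ (circleMap_mem_closedBall 0 zero_le_one θ)
      simp only [circleMap_zero, ofReal_one, one_mul] at h ⊢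
      exact h.symm
  · intro z hz ρ hρ hs
    have hsub : Metric.sphere z ρ ⊆ Metric.closedBall 0 1 :=
      (Metric.sphere_subset_closedBall.trans hs).trans Metric.ball_subset_closedBall
    exact (Real.rpow_le_rpow (hUnonneg z (Metric.ball_subset_closedBall hz))
      (hUsub.le_circleAverage hz hρ hs) (by linarith)).trans
      (rpow_circleAverage_le hρ.le (by linarith) (hUcont.mono hsub)
        fun w hw => hUnonneg w (hsub hw))
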